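/- Define C_0 = V* and, for each k ≥ 0, C_{k+1} = C_k ∪ {v ∈ N(C_k) : no other vertex of N(C_k) is C_k-equivalent to v}. If C_k = V for some k ≥ 0, then the network is controllable, i.e. ∂_{q_v} ∈ 𝓜 and ∂_{p_v} ∈ 𝓜 for every v ∈ V. -/

import Mathlib

/-!
Let `C` be a set of vertices already known to be controllable. Everything rests on the real vector
space `S` of families `g = (g_w)` of polynomials, indexed by the vertices, such that the field
`∑_w g_w(q_w) ∂_{p_w}` belongs to `𝓜` (`famSpace`).

* `S` is closed under `(f, g) ↦ (f g)'` (componentwise), because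
  `[[∑ f_w(q_w) ∂_{p_w}, X₀], ∑ g_w(q_w) ∂_{p_w}] = ∑ (f_w g_w)'(q_w) ∂_{p_w}`
  (`lieB_lieB_polyField`).
* For `c ∈ C`, discarding from `[∂_{q_c}, X₀]` its components along `∂_{p_u}`, `u ∈ C`, leaves
  `∑_w V''_{wc}(q_w - q_c) ∂_{p_w}`, with `w ∉ C` adjacent to `c`. Bracketing with `∂_{q_c}`
  differentiates the polynomials, and Taylor's formula in `q_c` removes the shift by `q_c`; hence
  the family `(V''_{wc})_w` and all its derivatives lie in `S`.

The rest is algebra about a space `S` closed under `(f, g) ↦ (f g)'`. Consider the algebra `multAlg S`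
of all real vectors `h` with `h • S ⊆ S`. If `f` and all its derivatives are in `S` and no `f_w` is
a nonzero constant, then `multAlg S` separates any two vertices `v`, `w` for which `f_v` and `f_w`
are not translates of each other (`sep`). To see this, let `n` be the maximal degree, `a_w` the
coefficient of degree `n` of `f_w`, and translate each variable so that the coefficient of degree
`n - 1` vanishes wherever `a_w ≠ 0`. The linear family `ℓ = f^{(n-1)}` is then a multiple of `a X`
where `a ≠ 0`, and `g ↦ (ℓ g)'` is diagonal in the monomials with nonzero eigenvalues, so a
polynomial in this operator inverts it; therefore `h X ∈ S` implies `h ∈ multAlg S`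
(`mem_multAlg_of_smul_X_mem`). This yields first `a ∈ multAlg S`, and then, by eigenprojections on a
level set of `a`, every coefficient of `f` on that level set. Vertices of smaller degree are reached
by induction, after multiplying `f` by the indicator of `a = 0`.

If `v` is alone in its `C`-equivalence class, the families coming from the various `c ∈ C` thus
separate `v` from every other vertex, so the indicator of `v` lies in `multAlg S`. Applying it to the
derivative of order `deg V''_{vc}` of `(V''_{wc})_w`, for some `c ∈ C` adjacent to `v`, gives
`∂_{p_v} ∈ 𝓜`, and bracketing with `X₀` gives `∂_{q_v} ∈ 𝓜`.
-/

open scoped Classical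
open Polynomial

noncomputable section

/-- Phase space ℝ^{2|V|}: positions `q = x.1` and momenta `p = x.2`. -/
abbrev Phase (V : Type) := (V → ℝ) × (V → ℝ)

/-- Lie bracket of vector fields: `[Y,Z](x) = DZ(x)·Y(x) − DY(x)·Z(x)`. -/
def lieB {V : Type} [Fintype V] (Y Z : Phase V → Phase V) : Phase V → Phase V :=
  fun x => fderiv ℝ Z x (Y x) - fderiv ℝ Y x (Z x)

/-- The constant vector field `∂_{p_v}`. -/
def dp {V : Type} [Fintype V] [DecidableEq V] (v : V) : Phase V → Phase V :=
  fun _ => (0, Pi.single v 1)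

/-- The constant vector field `∂_{q_v}`. -/
def dq {V : Type} [Fintype V] [DecidableEq V] (v : V) : Phase V → Phase V :=
  fun _ => (Pi.single v 1, 0)

/-- The constant vector field `∑_{v ∈ A} ∂_{p_v}`. -/
def dpSum {V : Type} [Fintype V] [DecidableEq V] (A : Finset V) : Phase V → Phase V :=
  fun _ => (0, ∑ v ∈ A, Pi.single v 1)

/-- The constant vector field `∑_{v ∈ A} ∂_{q_v}`. -/
def dqSum {V : Type} [Fintype V] [DecidableEq V] (A : Finset V) : Phase V → Phase V :=
  fun _ => (∑ v ∈ A, Pi.single v 1, 0)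

/-- The drift vector field
`X₀ = −∑_{v∈V*} γ_v p_v ∂_{p_v} + ∑_{v∈V} (p_v ∂_{q_v} − U_v'(q_v) ∂_{p_v})
      − ∑_{{u,v}∈E} V_{uv}'(q_u − q_v)(∂_{p_u} − ∂_{p_v})`,
written componentwise (using the symmetry `V_{vu}(x) = V_{uv}(−x)` of the
interaction potentials, the `∂_{p_v}`-component of the edge term at a vertex `v` is
`−∑_{w ~ v} V_{vw}'(q_v − q_w)`). -/
def X0 {V : Type} [Fintype V] [DecidableEq V] (G : SimpleGraph V) [DecidableRel G.Adj]
    (γ : V → ℝ) (U : V → ℝ → ℝ) (Vp : V → V → Polynomial ℝ) : Phase V → Phase V :=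
  fun x =>
    (x.2, fun v =>
      -(γ v) * x.2 v - deriv (U v) (x.1 v) -
        ∑ w ∈ Finset.univ.filter (fun w => G.Adj v w),
          (derivative (Vp v w)).eval (x.1 v - x.1 w))

/-- The smallest collection `𝓜` of vector fields on `ℝ^{2|V|}` that contains `∂_{p_v}`
for every `v ∈ V*`, and is closed under linear combinations, Lie brackets,
bracketing with `X₀`, and multiplication by smooth scalar functions. -/
inductive MM {V : Type} [Fintype V] [DecidableEq V] (Vstar : Finset V)
    (X₀ : Phase V → Phase V) : (Phase V → Phase V) → Prop
  | basic (v : V) (hv : v ∈ Vstar) : MM Vstar X₀ (dp v)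
  | add {Y Z : Phase V → Phase V} : MM Vstar X₀ Y → MM Vstar X₀ Z → MM Vstar X₀ (Y + Z)
  | smul (a : ℝ) {Y : Phase V → Phase V} : MM Vstar X₀ Y → MM Vstar X₀ (a • Y)
  | lie {Y Z : Phase V → Phase V} : MM Vstar X₀ Y → MM Vstar X₀ Z → MM Vstar X₀ (lieB Y Z)
  | lieX {Y : Phase V → Phase V} : MM Vstar X₀ Y → MM Vstar X₀ (lieB Y X₀)
  | mulS (f : Phase V → ℝ) (hf : ContDiff ℝ (⊤ : ℕ∞) f) {Y : Phase V → Phase V} :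
      MM Vstar X₀ Y → MM Vstar X₀ (fun x => f x • Y x)

/-- A vertex `v` is controllable if `∂_{q_v} ∈ 𝓜` and `∂_{p_v} ∈ 𝓜`. -/
def Controllable {V : Type} [Fintype V] [DecidableEq V] (Vstar : Finset V)
    (X₀ : Phase V → Phase V) (v : V) : Prop :=
  MM Vstar X₀ (dq v) ∧ MM Vstar X₀ (dp v)

/-- Two polynomials are equivalent if `f(·) = g(· + δ)` for some `δ ∈ ℝ`. -/
def PolyEquiv (f g : Polynomial ℝ) : Prop :=
  ∃ δ : ℝ, ∀ x : ℝ, f.eval x = g.eval (x + δ)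

/-- `N(C)`: the set of vertices not in `C` having at least one neighbor in `C`. -/
def NC {V : Type} [Fintype V] [DecidableEq V] (G : SimpleGraph V) [DecidableRel G.Adj]
    (C : Finset V) : Finset V :=
  Finset.univ.filter fun v => v ∉ C ∧ ∃ c ∈ C, G.Adj c v

/-- `v` and `w` are `C`-equivalent: they are `C`-siblings (connected to `C` in exactly
the same way) and for each `c ∈ C` adjacent to both, the polynomials `V''_{cv}` and
`V''_{cw}` are equivalent. -/
def CEquiv {V : Type} (G : SimpleGraph V) (Vp : V → V → Polynomial ℝ) (C : Finset V)
    (v w : V) : Prop :=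
  (∀ c ∈ C, G.Adj c v ↔ G.Adj c w) ∧
  (∀ c ∈ C, G.Adj c v → G.Adj c w →
    PolyEquiv (derivative (derivative (Vp c v))) (derivative (derivative (Vp c w))))

/-- The recursively defined sets `C_0 = V*`,
`C_{k+1} = C_k ∪ {v ∈ N(C_k) : no other vertex of N(C_k) is C_k-equivalent to v}`. -/
def Cseq {V : Type} [Fintype V] [DecidableEq V] (G : SimpleGraph V) [DecidableRel G.Adj]
    (Vp : V → V → Polynomial ℝ) (Vstar : Finset V) : ℕ → Finset V
  | 0 => Vstar
  | k + 1 =>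
    Cseq G Vp Vstar k ∪
      (NC G (Cseq G Vp Vstar k)).filter fun v =>
        ∀ w ∈ NC G (Cseq G Vp Vstar k), CEquiv G Vp (Cseq G Vp Vstar k) w v → w = v

/-! ### Spaces of polynomial families and their multipliers -/

/-- Closure of a space of polynomial families under the componentwise operation
`(f, g) ↦ (f g)'`. -/
def LeibnizClosed {W : Type} (S : Submodule ℝ (W → ℝ[X])) : Prop :=
  ∀ f ∈ S, ∀ g ∈ S, (fun w => derivative (f w * g w)) ∈ S

/-- The algebra of real vectors `h` that preserve `S` when acting by componentwise scaling. -/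
def multAlg {W : Type} (S : Submodule ℝ (W → ℝ[X])) : Subalgebra ℝ (W → ℝ) where
  carrier := {h | ∀ g ∈ S, (fun w => h w • g w) ∈ S}
  mul_mem' := by
    intro a b ha hb g hg
    have := ha _ (hb g hg)
    simpa [mul_smul] using this
  add_mem' := by
    intro a b ha hb g hg
    have := S.add_mem (ha g hg) (hb g hg)
    convert this using 1
    funext w
    simp [add_smul]
  algebraMap_mem' := by
    intro r g hg
    exact S.smul_mem r hg

lemma exists_interp (s : Finset ℝ) (φ : ℝ → ℝ) :
    ∃ p : ℝ[X], ∀ x ∈ s, p.eval x = φ x :=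
  ⟨Lagrange.interpolate s id φ, fun _ hx =>
    Lagrange.eval_interpolate_at_node φ (Set.injOn_id _) hx⟩

/-- A subalgebra of `ℝ^W`, with `W` finite, is stable under applying an arbitrary function to the
values, since on finitely many points every function is a polynomial. -/
lemma comp_mem {W : Type} [Fintype W] (E : Subalgebra ℝ (W → ℝ)) {h : W → ℝ} (hh : h ∈ E)
    (φ : ℝ → ℝ) : (fun w => φ (h w)) ∈ E := by
  obtain ⟨p, hp⟩ := exists_interp (Finset.univ.image h) φ
  have h1 : aeval h p ∈ E :=
    Algebra.adjoin_le (Set.singleton_subset_iff.2 hh) (aeval_mem_adjoin_singleton ℝ h)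
  convert h1 using 1
  funext w
  rw [aeval_fn_apply, coe_aeval_eq_eval, hp _ (Finset.mem_image_of_mem h (Finset.mem_univ w))]

/-- A subalgebra that separates `v` from every other point contains the indicator of `v`. -/
lemma single_mem {W : Type} [Fintype W] (E : Subalgebra ℝ (W → ℝ)) (v : W)
    (hsep : ∀ w, w ≠ v → ∃ h ∈ E, h v ≠ h w) :
    (fun w => if w = v then (1 : ℝ) else 0) ∈ E := by
  choose! h hE hne using hsep
  have h1 : (∏ w ∈ Finset.univ.erase v, fun u => if h w u = h w v then (1 : ℝ) else 0) ∈ E := by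
    refine prod_mem fun w hw => ?_
    exact comp_mem E (hE w (Finset.ne_of_mem_erase hw)) (fun t => if t = h w v then 1 else 0)
  convert h1 using 1
  funext u
  rw [Finset.prod_apply]
  by_cases hu : u = v
  · subst hu
    simp
  · rw [if_neg hu]
    symm
    refine Finset.prod_eq_zero (i := u) (by simp [hu]) ?_
    exact if_neg (hne u hu).symm

/-- The operator `g ↦ (l g)'`, componentwise. -/
def mulDeriv {W : Type} (l : W → ℝ[X]) : Module.End ℝ (W → ℝ[X]) where
  toFun g := fun w => derivative (l w * g w)
  map_add' f g := by funext w; simp [mul_add]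
  map_smul' r g := by funext w; simp

lemma aeval_mem {M : Type*} [AddCommGroup M] [Module ℝ M] (S : Submodule ℝ M)
    (T : Module.End ℝ M) (hT : ∀ g ∈ S, T g ∈ S) (p : ℝ[X]) : ∀ g ∈ S, aeval T p g ∈ S := by
  induction p using Polynomial.induction_on' with
  | add p q hp hq =>
    intro g hg
    simpa using S.add_mem (hp g hg) (hq g hg)
  | monomial n r =>
    intro g hg
    rw [aeval_monomial]
    have : ∀ n : ℕ, (T ^ n) g ∈ S := by
      intro n
      induction n with
      | zero => simpa
      | succ n ih => rw [pow_succ']; exact hT _ ih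
    simpa [Module.algebraMap_end_apply] using S.smul_mem r (this n)

lemma coeff_derivative_smul_X_mul (a : ℝ) (g : ℝ[X]) (k : ℕ) :
    (derivative ((a • X) * g)).coeff k = a * (k + 1) * g.coeff k := by
  rw [coeff_derivative, smul_mul_assoc, coeff_smul, coeff_X_mul, smul_eq_mul]
  ring

/-- At a vertex where `l = a X`, the operator `mulDeriv l` is diagonal in the monomials: `X ^ k` is
an eigenvector with eigenvalue `a (k + 1)`. -/
lemma coeff_aeval_mulDeriv {W : Type} (l : W → ℝ[X]) (w : W) (a : ℝ) (hl : l w = a • X)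
    (p : ℝ[X]) (g : W → ℝ[X]) (k : ℕ) :
    ((aeval (mulDeriv l) p g) w).coeff k = p.eval (a * (k + 1)) * (g w).coeff k := by
  induction p using Polynomial.induction_on' with
  | add p q hp hq =>
    simp only [map_add, LinearMap.add_apply, Pi.add_apply, coeff_add, hp, hq, eval_add, add_mul]
  | monomial n r =>
    rw [aeval_monomial]
    have : ∀ n : ℕ, (((mulDeriv l) ^ n) g w).coeff k = (a * (k + 1)) ^ n * (g w).coeff k := by
      intro n
      induction n with
      | zero => simp
      | succ n ih =>
        rw [pow_succ']
        change (derivative (l w * ((mulDeriv l ^ n) g w))).coeff k = _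
        rw [hl, coeff_derivative_smul_X_mul, ih]
        ring
    simp [Module.algebraMap_end_apply, this, mul_assoc]

/-- Let `l ∈ S` be equal to `a X` on the support of `a`. If `h X ∈ S` with `h` supported there, then
`h` is a multiplier: with `T g = (l g)'`, one has `T (h X) = 2 a h X ∈ S`, and the product of
this family with `T⁻¹ g` has derivative `2 h g`. -/
lemma mem_multAlg_of_smul_X_mem {W : Type} [Fintype W] {S : Submodule ℝ (W → ℝ[X])}
    (hS : LeibnizClosed S) {l : W → ℝ[X]} (hl : l ∈ S) (a : W → ℝ)
    (hla : ∀ w, a w ≠ 0 → l w = a w • X) (h : W → ℝ) (hsupp : ∀ w, a w = 0 → h w = 0)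
    (hh : (fun w => h w • (X : ℝ[X])) ∈ S) : h ∈ multAlg S := by
  intro g hg
  have h2 := hS _ hl _ hh
  -- `p (mulDeriv l)` inverts `mulDeriv l` on the monomials of `g` over the support of `a`
  obtain ⟨p, hp⟩ := exists_interp
    (Finset.univ.biUnion fun w : W => (g w).support.image fun k : ℕ => a w * (k + 1))
    (fun t => t⁻¹)
  have h3 := S.smul_mem (2⁻¹ : ℝ)
    (hS _ h2 _ (aeval_mem S (mulDeriv l) (fun g hg => hS _ hl _ hg) p g hg))
  convert h3 using 1
  funext w
  by_cases ha : a w = 0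
  · simp [hsupp w ha]
  · have e : derivative (l w * (h w • (X : ℝ[X]))) = (2 * a w * h w) • X := by
      ext k
      rw [hla w ha, coeff_derivative_smul_X_mul, coeff_smul, coeff_smul, coeff_X]
      by_cases hk : 1 = k
      · subst hk; simp only [if_true, smul_eq_mul]; push_cast; ring
      · simp [hk]
    ext k
    simp only [Pi.smul_apply, coeff_smul, smul_eq_mul]
    rw [e, coeff_derivative_smul_X_mul, coeff_aeval_mulDeriv l w (a w) (hla w ha)]
    by_cases hk : (g w).coeff k = 0
    · simp [hk]
    · rw [hp]
      · have : (k : ℝ) + 1 ≠ 0 := by positivity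
        field_simp
      · simp only [Finset.mem_biUnion, Finset.mem_univ, true_and, Finset.mem_image, mem_support_iff]
        exact ⟨w, k, hk, rfl⟩

/-! ### Separation of inequivalent polynomials -/

/-- Separation in top degree `m + 1`, for families normalized so that the coefficient of degree `m`
vanishes wherever the degree is `m + 1`: the top coefficient is a multiplier, and multipliers
separate distinct polynomials having the same nonzero top coefficient. -/
lemma sep_top {W : Type} [Fintype W] {S : Submodule ℝ (W → ℝ[X])}
    (hS : LeibnizClosed S) (f : W → ℝ[X]) (m : ℕ)
    (hf : ∀ k, (fun w => derivative^[k] (f w)) ∈ S)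
    (hdeg : ∀ w, (f w).natDegree ≤ m + 1)
    (hnorm : ∀ w, (f w).coeff (m + 1) ≠ 0 → (f w).coeff m = 0) :
    (fun w => (f w).coeff (m + 1)) ∈ multAlg S ∧
    ∀ v w, (f v).coeff (m + 1) = (f w).coeff (m + 1) → (f v).coeff (m + 1) ≠ 0 → f v ≠ f w →
      ∃ h ∈ multAlg S, h v ≠ h w := by
  set a : W → ℝ := fun w => (f w).coeff (m + 1) with ha
  set K : ℝ := ((m + 1).descFactorial m : ℝ) with hK
  have hK0 : K ≠ 0 := by
    rw [hK, Nat.cast_ne_zero, Ne, Nat.descFactorial_eq_zero_iff_lt]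
    omega
  set l : W → ℝ[X] := fun w => derivative^[m] (f w) with hl
  have hlS : l ∈ S := hf m
  have hl1 : ∀ w k, (l w).coeff (k + 2) = 0 := by
    intro w k
    rw [hl, coeff_iterate_derivative, coeff_eq_zero_of_natDegree_lt (by have := hdeg w; omega),
      smul_zero]
  have hl2 : ∀ w, (l w).coeff 1 = K * a w := by
    intro w
    rw [hl, coeff_iterate_derivative, add_comm 1 m, nsmul_eq_mul]
  have hlX : ∀ w, K * a w ≠ 0 → l w = (K * a w) • X := by
    intro w hw
    ext k
    match k with
    | 0 =>
      rw [hl, coeff_iterate_derivative, zero_add, hnorm w (right_ne_zero_of_mul hw)]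
      simp
    | 1 => simp [hl2]
    | k + 2 => rw [hl1, coeff_smul, coeff_X_of_ne_one (by omega), smul_zero]
  have hlC : ∀ w, a w = 0 → derivative (l w) = 0 := by
    intro w hw
    ext k
    rw [coeff_derivative]
    match k with
    | 0 => simp [hl2, hw]
    | k + 1 => rw [hl1, zero_mul, coeff_zero]
  -- Off the support of `a` the family `l` is constant, so `(l ^ 2)'` vanishes there; on the support
  -- `(l (l ^ 2)')'` is `4 (K a) ^ 3 X`. The exponent 3 is harmless since cubing is injective.
  have hcube : (fun w => (K * a w) ^ 3 • (X : ℝ[X])) ∈ S := by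
    have h1 := hS _ hlS _ (hS _ hlS _ hlS)
    convert S.smul_mem (4⁻¹ : ℝ) h1 using 1
    funext w
    rw [Pi.smul_apply]
    by_cases hw : a w = 0
    · simp [derivative_mul, hlC w hw, hw]
    · rw [hlX w (mul_ne_zero hK0 hw)]
      simp only [smul_eq_C_mul, derivative_mul, derivative_C, derivative_X]
      have e : (C (4⁻¹ : ℝ) : ℝ[X]) * 4 = 1 := by
        rw [show (4 : ℝ[X]) = C 4 from rfl, ← C_mul]; norm_num
      simp only [map_pow, map_mul]
      simp
      linear_combination (-(C K ^ 3 * C (a w) ^ 3 * X)) * e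
  have hE3 : (fun w => (K * a w) ^ 3) ∈ multAlg S := by
    refine mem_multAlg_of_smul_X_mem hS hlS (fun w => K * a w) hlX _ ?_ hcube
    intro w hw
    simp [hw]
  have haE : a ∈ multAlg S := by
    have hinj : Function.Injective (fun t : ℝ => (K * t) ^ 3) := by
      intro s t hst
      exact mul_left_cancel₀ hK0 ((Odd.strictMono_pow (by decide : Odd 3)).injective hst)
    convert comp_mem _ hE3 (Function.invFun (fun t : ℝ => (K * t) ^ 3)) using 1
    funext w
    exact (Function.leftInverse_invFun hinj (a w)).symm
  refine ⟨haE, ?_⟩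
  intro v w hvw hv0 hne
  set α := a v with hα
  have hα0 : α ≠ 0 := hv0
  -- the indicator of the level set of `a` containing `v` and `w`
  set i : W → ℝ := fun u => if a u = α then 1 else 0 with hi
  have hiE : i ∈ multAlg S := comp_mem _ haE (fun t => if t = α then 1 else 0)
  have hii : ∀ u, i u * i u = i u := by intro u; simp only [hi]; split_ifs <;> simp
  have hia : ∀ u, i u * a u = i u * α := by
    intro u; simp only [hi]; split_ifs with h <;> simp [h]
  have hiv : i v = 1 := if_pos rfl
  have hiw : i w = 1 := if_pos hvw.symm
  have hi0 : ∀ u, i u ≠ 0 → a u = α := by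
    intro u hu; by_contra h; exact hu (if_neg h)
  have hY : (fun u => i u • (X : ℝ[X])) ∈ S := by
    convert S.smul_mem (K * α)⁻¹ (hiE _ hlS) using 1
    funext u
    rw [Pi.smul_apply]
    by_cases hu : i u = 0
    · simp [hu]
    · rw [hlX u (by rw [hi0 u hu]; exact mul_ne_zero hK0 hα0), hi0 u hu, smul_smul, smul_smul]
      congr 1
      field_simp
  have hone : (fun u => i u • (1 : ℝ[X])) ∈ S := by
    convert S.smul_mem (K * α)⁻¹ (hiE _ (hf (m + 1))) using 1
    funext u
    rw [Pi.smul_apply]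
    by_cases hu : i u = 0
    · simp [hu]
    · rw [Function.iterate_succ_apply']
      have := hlX u (by rw [hi0 u hu]; exact mul_ne_zero hK0 hα0)
      simp only [hl] at this
      rw [this, derivative_smul, derivative_X, hi0 u hu, smul_smul, smul_smul]
      congr 1
      field_simp
  -- multiplying by `i` and differentiating lowers the degree of a monomial family
  have hlower : ∀ (c : W → ℝ) (k j : ℕ), (fun u => (i u * c u) • (X : ℝ[X]) ^ (k + j)) ∈ S →
      (fun u => (i u * c u) • (X : ℝ[X]) ^ k) ∈ S := by
    intro c k j
    induction j with
    | zero => exact id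
    | succ j ih =>
      intro h
      apply ih
      convert S.smul_mem ((k + j + 1 : ℝ))⁻¹ (hS _ hone _ h) using 1
      funext u
      rw [Pi.smul_apply, smul_mul_smul_comm, one_mul, ← mul_assoc, hii, derivative_smul,
        derivative_X_pow, ← add_assoc, Nat.add_sub_cancel, ← smul_eq_C_mul, smul_smul, smul_smul]
      have : (k + j + 1 : ℝ) ≠ 0 := by positivity
      push_cast
      congr 1
      field_simp
  -- projection of `i f` onto the eigenspace of `g ↦ (i X g)'` for the eigenvalue `k + 1`
  have hproj : ∀ k, (fun u => (i u * (f u).coeff k) • (X : ℝ[X]) ^ k) ∈ S := by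
    intro k
    obtain ⟨p, hp⟩ := exists_interp ((Finset.range (m + 2)).image fun j : ℕ => (j + 1 : ℝ))
      (fun t => if t = k + 1 then 1 else 0)
    convert aeval_mem S (mulDeriv fun u => i u • X) (fun g hg => hS _ hY _ hg) p _
      (hiE _ (hf 0)) using 1
    funext u
    ext j
    rw [coeff_aeval_mulDeriv _ u (i u) rfl]
    simp only [Function.iterate_zero, id_eq, coeff_smul, smul_eq_mul, coeff_X_pow]
    by_cases hu : i u = 0
    · simp [hu]
    have hu1 : i u = 1 := by rw [hi]; exact if_pos (hi0 u hu)
    rw [hu1, one_mul, one_mul, one_mul]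
    by_cases hj : j < m + 2
    · rw [hp _ (Finset.mem_image_of_mem _ (Finset.mem_range.2 hj))]
      by_cases hjk : j = k
      · simp [hjk]
      · simp [hjk]
    · rw [coeff_eq_zero_of_natDegree_lt (n := j) (by have := hdeg u; omega)]
      by_cases hjk : j = k
      · rw [← hjk, coeff_eq_zero_of_natDegree_lt (n := j) (by have := hdeg u; omega)]; simp
      · simp [hjk]
  obtain ⟨k, hk⟩ : ∃ k, (f v).coeff k ≠ (f w).coeff k := by
    by_contra! h
    exact hne (Polynomial.ext h)
  have hX : (fun u => (i u * (f u).coeff k) • (X : ℝ[X])) ∈ S := by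
    match k, hk with
    | k + 1, _ =>
      have := hlower (fun u => (f u).coeff (k + 1)) 1 k (by rw [add_comm 1 k]; exact hproj (k + 1))
      simpa using this
    | 0, hk =>
      -- For the constant coefficient, multiply by `X ^ 2`, available if the degree is at least 2;
      -- in degree 1 the normalization makes the constant coefficients vanish.
      rcases Nat.eq_zero_or_pos m with hm | hm
      · refine absurd ?_ hk
        rw [← hm, hnorm v hv0, hnorm w (hvw ▸ hv0)]
      · have h2 := hlower a 2 (m - 1)
          (by rw [show 2 + (m - 1) = m + 1 by omega]; exact hproj (m + 1))
        convert S.smul_mem (2 * α)⁻¹ (hS _ h2 _ (hproj 0)) using 1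
        funext u
        rw [Pi.smul_apply, smul_mul_smul_comm, hia, pow_zero, mul_one, derivative_smul,
          derivative_X_pow, ← smul_eq_C_mul, smul_smul, smul_smul]
        simp only [Nat.add_one_sub_one, pow_one]
        congr 1
        have h2 := hii u
        field_simp
        push_cast
        linear_combination (-2 * (f u).coeff 0) * h2
  refine ⟨fun u => i u * (f u).coeff k, ?_, ?_⟩
  · refine mem_multAlg_of_smul_X_mem hS hlS (fun w => K * a w) hlX _ ?_ hX
    intro u hu
    have : i u = 0 := by
      by_contra h
      exact mul_ne_zero hK0 (by rw [hi0 u h]; exact hv0) hu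
    simp [this]
  · simpa [hiv, hiw] using hk

/-- Translation of the variable of the `w`-th component by `δ w`. -/
def shift {W : Type} (δ : W → ℝ) : (W → ℝ[X]) →ₗ[ℝ] (W → ℝ[X]) where
  toFun g := fun w => taylor (δ w) (g w)
  map_add' f g := by funext w; simp
  map_smul' r g := by funext w; simp

lemma derivative_taylor' (r : ℝ) (f : ℝ[X]) :
    derivative (taylor r f) = taylor r (derivative f) := by
  simp [taylor_apply, derivative_comp]

lemma iterate_derivative_taylor' (r : ℝ) (f : ℝ[X]) (k : ℕ) :
    derivative^[k] (taylor r f) = taylor r (derivative^[k] f) := by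
  induction k with
  | zero => rfl
  | succ k ih => rw [Function.iterate_succ_apply', ih, derivative_taylor',
      Function.iterate_succ_apply']

lemma polyEquiv_of_taylor_eq {f g : ℝ[X]} {r s : ℝ} (h : taylor r f = taylor s g) :
    PolyEquiv f g := by
  refine ⟨s - r, fun x => ?_⟩
  have := congrArg (eval (x - r)) h
  rw [taylor_eval, taylor_eval, sub_add_cancel] at this
  rw [this]
  congr 1
  ring

/-- The conclusion of `sep_top` without normalization, for polynomials that are not translates of
each other: translating the variables changes neither the hypotheses on `S` nor its multipliers. -/
lemma sep_top' {W : Type} [Fintype W] {S : Submodule ℝ (W → ℝ[X])}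
    (hS : LeibnizClosed S) (f : W → ℝ[X]) (m : ℕ)
    (hf : ∀ k, (fun w => derivative^[k] (f w)) ∈ S)
    (hdeg : ∀ w, (f w).natDegree ≤ m + 1) :
    (fun w => (f w).coeff (m + 1)) ∈ multAlg S ∧
    ∀ v w, (f v).coeff (m + 1) = (f w).coeff (m + 1) → (f v).coeff (m + 1) ≠ 0 →
      ¬ PolyEquiv (f v) (f w) → ∃ h ∈ multAlg S, h v ≠ h w := by
  set δ : W → ℝ := fun w => (f w).coeff m / ((m + 1) * (f w).coeff (m + 1)) with hδ
  set S' := S.comap (shift δ) with hS'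
  have hE : ∀ h ∈ multAlg S', h ∈ multAlg S := by
    intro h hh g hg
    have h1 : (fun w => taylor (-δ w) (g w)) ∈ S' := by
      change (fun w => taylor (δ w) (taylor (-δ w) (g w))) ∈ S
      simpa [taylor_taylor] using hg
    have h2 : (fun w => taylor (δ w) (h w • taylor (-δ w) (g w))) ∈ S := hh _ h1
    simpa [taylor_taylor] using h2
  have hcl : LeibnizClosed S' := by
    intro f hf g hg
    have := hS _ hf _ hg
    change (fun w => taylor (δ w) (derivative (f w * g w))) ∈ S
    simp only [← derivative_taylor', taylor_mul]
    exact this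
  set F : W → ℝ[X] := fun w => taylor (-δ w) (f w) with hF
  have hFd : ∀ w, (F w).natDegree ≤ m + 1 := by
    intro w
    rw [hF, natDegree_taylor]
    exact hdeg w
  have hc1 : ∀ w, (F w).coeff (m + 1) = (f w).coeff (m + 1) := by
    intro w
    rw [hF, taylor_coeff, hasseDeriv_apply, sum_over_range' _ (by simp) (m + 2)
        (by have := hdeg w; omega), Finset.sum_range_succ, Finset.sum_eq_zero]
    · simp
    · intro j hj
      rw [Nat.choose_eq_zero_of_lt (Finset.mem_range.1 hj)]
      simp
  -- this vanishes when the top coefficient is nonzero, by the choice of `δ`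
  have hc0 : ∀ w, (F w).coeff m = (f w).coeff m - δ w * ((m + 1) * (f w).coeff (m + 1)) := by
    intro w
    rw [hF, taylor_coeff, hasseDeriv_apply, sum_over_range' _ (by simp) (m + 2)
        (by have := hdeg w; omega), Finset.sum_range_succ, Finset.sum_range_succ, Finset.sum_eq_zero]
    · simp
      ring
    · intro j hj
      rw [Nat.choose_eq_zero_of_lt (Finset.mem_range.1 hj)]
      simp
  obtain ⟨h1, h2⟩ := sep_top hcl F m (by
      intro k
      change (fun w => taylor (δ w) (derivative^[k] (taylor (-δ w) (f w)))) ∈ S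
      simpa [iterate_derivative_taylor', taylor_taylor] using hf k) hFd (by
      intro w hw
      rw [hc1] at hw
      rw [hc0, hδ]
      field_simp
      ring)
  simp only [hc1] at h1 h2
  refine ⟨hE _ h1, fun v w hvw hv hne => ?_⟩
  obtain ⟨h, hh, hne'⟩ := h2 v w hvw hv (fun e => hne (polyEquiv_of_taylor_eq e))
  exact ⟨h, hE h hh, hne'⟩

/-- If `f` and its derivatives lie in `S` and no component of `f` is a nonzero constant, then the
multipliers of `S` separate vertices with inequivalent components. -/
lemma sep {W : Type} [Fintype W] {S : Submodule ℝ (W → ℝ[X])}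
    (hS : LeibnizClosed S) (n : ℕ) : ∀ (f : W → ℝ[X])
    (_ : ∀ k, (fun w => derivative^[k] (f w)) ∈ S)
    (_ : ∀ w, (f w).natDegree ≤ n) (_ : ∀ w, (f w).natDegree = 0 → f w = 0)
    (v w : W) (_ : ¬ PolyEquiv (f v) (f w)), ∃ h ∈ multAlg S, h v ≠ h w := by
  induction n with
  | zero =>
    intro f _ hdeg h0 v w hne
    refine absurd ⟨0, fun x => ?_⟩ hne
    rw [h0 v (Nat.le_zero.1 (hdeg v)), h0 w (Nat.le_zero.1 (hdeg w))]
    simp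
  | succ n ih =>
    intro f hf hdeg h0 v w hne
    obtain ⟨h1, h2⟩ := sep_top' hS f n hf hdeg
    by_cases hvw : (f v).coeff (n + 1) = (f w).coeff (n + 1)
    swap
    · exact ⟨_, h1, hvw⟩
    by_cases hv : (f v).coeff (n + 1) = 0
    swap
    · exact h2 v w hvw hv hne
    -- both vertices have smaller degree: cut off those of degree `n + 1` and lower the bound
    have hi := comp_mem _ h1 (fun t => if t = 0 then 1 else 0)
    refine ih (fun u => (if (f u).coeff (n + 1) = 0 then (1 : ℝ) else 0) • f u) ?_ ?_ ?_ v w ?_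
    · intro k
      simp only [iterate_derivative_smul]
      exact hi _ (hf k)
    · intro u
      split_ifs with hu
      · rw [one_smul]
        by_contra hlt
        have hd : (f u).natDegree = n + 1 := by have := hdeg u; omega
        rw [← hd, coeff_natDegree, leadingCoeff_eq_zero] at hu
        simp [hu] at hd
      · simp
    · intro u
      split_ifs with hu
      · simpa using h0 u
      · simp
    · simpa [hv, ← hvw] using hne

/-! ### Brackets of polynomial vector fields with the drift -/

lemma fderiv_snd_eq {V : Type} [Fintype V] {F : Phase V → Phase V} {x h : Phase V} {w : V} {y : ℝ}
    (hF : DifferentiableAt ℝ F x)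
    (hd : HasDerivAt (fun t : ℝ => (F (x + t • h)).2 w) y 0) : (fderiv ℝ F x h).2 w = y := by
  have h1 : HasDerivAt (fun t : ℝ => F (x + t • h)) (fderiv ℝ F x h) 0 :=
    hF.hasFDerivAt.hasLineDerivAt h
  exact (hasDerivAt_pi.1 h1.snd w).unique hd

lemma fderiv_fst_eq {V : Type} [Fintype V] {F : Phase V → Phase V} {x h : Phase V} {w : V} {y : ℝ}
    (hF : DifferentiableAt ℝ F x)
    (hd : HasDerivAt (fun t : ℝ => (F (x + t • h)).1 w) y 0) : (fderiv ℝ F x h).1 w = y := by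
  have h1 : HasDerivAt (fun t : ℝ => F (x + t • h)) (fderiv ℝ F x h) 0 :=
    hF.hasFDerivAt.hasLineDerivAt h
  exact (hasDerivAt_pi.1 h1.fst w).unique hd

lemma contDiff_eval {E : Type*} [NormedAddCommGroup E] [NormedSpace ℝ E] (p : ℝ[X]) {f : E → ℝ}
    (hf : ContDiff ℝ (⊤ : ℕ∞) f) : ContDiff ℝ (⊤ : ℕ∞) (fun x => p.eval (f x)) := by
  have := (p.contDiff_aeval (𝕜 := ℝ) (n := (⊤ : ℕ∞))).comp hf
  simpa [Function.comp_def] using this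

lemma contDiff_q {V : Type} [Fintype V] (w : V) :
    ContDiff ℝ (⊤ : ℕ∞) (fun x : Phase V => x.1 w) := by fun_prop

lemma contDiff_p {V : Type} [Fintype V] (w : V) :
    ContDiff ℝ (⊤ : ℕ∞) (fun x : Phase V => x.2 w) := by fun_prop

lemma contDiff_X0 {V : Type} [Fintype V] [DecidableEq V] (G : SimpleGraph V) [DecidableRel G.Adj]
    (γ : V → ℝ) (U : V → ℝ → ℝ) (Vp : V → V → Polynomial ℝ)
    (hU : ∀ v, ContDiff ℝ (⊤ : ℕ∞) (U v)) : ContDiff ℝ (⊤ : ℕ∞) (X0 G γ U Vp) := by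
  refine ContDiff.prodMk (by fun_prop) (contDiff_pi.2 fun w => ?_)
  refine ((contDiff_const.mul (contDiff_p w)).sub ?_).sub (ContDiff.sum fun u _ => ?_)
  · have h1 : ContDiff ℝ (⊤ : ℕ∞) (deriv (U w)) := (contDiff_infty_iff_deriv.1 (hU w)).2
    exact h1.comp (contDiff_q w)
  · exact contDiff_eval _ ((contDiff_q w).sub (contDiff_q u))

/-- The vector field `∑_w g_w(q_w) ∂_{p_w}`. -/
def polyField {V : Type} [Fintype V] (g : V → ℝ[X]) : Phase V → Phase V :=
  fun x => (0, fun w => (g w).eval (x.1 w))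

/-- The vector field `∑_w g_w(q_w - q_c) ∂_{p_w}`. -/
def relField {V : Type} [Fintype V] (c : V) (g : V → ℝ[X]) : Phase V → Phase V :=
  fun x => (0, fun w => (g w).eval (x.1 w - x.1 c))

lemma contDiff_polyField {V : Type} [Fintype V] (g : V → ℝ[X]) :
    ContDiff ℝ (⊤ : ℕ∞) (polyField g) :=
  contDiff_const.prodMk (contDiff_pi.2 fun w => contDiff_eval _ (contDiff_q w))

lemma contDiff_relField {V : Type} [Fintype V] (c : V) (g : V → ℝ[X]) :
    ContDiff ℝ (⊤ : ℕ∞) (relField c g) :=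
  contDiff_const.prodMk
    (contDiff_pi.2 fun w => contDiff_eval _ ((contDiff_q w).sub (contDiff_q c)))

lemma hasDerivAt_lin (a b : ℝ) : HasDerivAt (fun t : ℝ => a + t * b) b 0 := by
  simpa using ((hasDerivAt_id (0 : ℝ)).mul_const b).const_add a

lemma hasDerivAt_eval_lin (p : ℝ[X]) (a b : ℝ) :
    HasDerivAt (fun t : ℝ => p.eval (a + t * b)) ((derivative p).eval a * b) 0 := by
  have h := HasDerivAt.comp (0 : ℝ) (by simpa using p.hasDerivAt (a + 0 * b)) (hasDerivAt_lin a b)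
  simpa [Function.comp_def] using h

lemma fderiv_polyField {V : Type} [Fintype V] (g : V → ℝ[X]) (x h : Phase V) :
    fderiv ℝ (polyField g) x h = (0, fun w => (derivative (g w)).eval (x.1 w) * h.1 w) := by
  have hd : DifferentiableAt ℝ (polyField g) x :=
    (contDiff_polyField g).differentiable (by simp) x
  refine Prod.ext (funext fun w => fderiv_fst_eq hd ?_) (funext fun w => fderiv_snd_eq hd ?_)
  · exact hasDerivAt_const _ _
  · exact hasDerivAt_eval_lin _ _ _

lemma lieB_polyField_X0 {V : Type} [Fintype V] [DecidableEq V] (G : SimpleGraph V)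
    [DecidableRel G.Adj] (γ : V → ℝ) (U : V → ℝ → ℝ) (Vp : V → V → Polynomial ℝ)
    (hU : ∀ v, ContDiff ℝ (⊤ : ℕ∞) (U v)) (g : V → ℝ[X]) :
    lieB (polyField g) (X0 G γ U Vp) = fun x => (fun w => (g w).eval (x.1 w), fun w =>
      -(γ w) * (g w).eval (x.1 w) - (derivative (g w)).eval (x.1 w) * x.2 w) := by
  funext x
  have hd : DifferentiableAt ℝ (X0 G γ U Vp) x :=
    (contDiff_X0 G γ U Vp hU).differentiable (by simp) x
  have h1 : fderiv ℝ (X0 G γ U Vp) x (polyField g x) =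
      (fun w => (g w).eval (x.1 w), fun w => -(γ w) * (g w).eval (x.1 w)) := by
    refine Prod.ext (funext fun w => fderiv_fst_eq hd ?_) (funext fun w => fderiv_snd_eq hd ?_)
    · exact hasDerivAt_lin _ _
    · simp only [X0, polyField, Prod.fst_add, Prod.snd_add, Prod.smul_fst, Prod.smul_snd,
        smul_zero, add_zero, Pi.add_apply, Pi.smul_apply, Pi.zero_apply, smul_eq_mul]
      exact (((hasDerivAt_lin (x.2 w) _).const_mul _).sub_const _).sub_const _
  rw [lieB, h1, fderiv_polyField]
  ext w <;> simp [X0]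

lemma lieB_lieB_polyField {V : Type} [Fintype V] [DecidableEq V] (G : SimpleGraph V)
    [DecidableRel G.Adj] (γ : V → ℝ) (U : V → ℝ → ℝ) (Vp : V → V → Polynomial ℝ)
    (hU : ∀ v, ContDiff ℝ (⊤ : ℕ∞) (U v)) (f g : V → ℝ[X]) :
    lieB (lieB (polyField f) (X0 G γ U Vp)) (polyField g) =
      polyField fun w => derivative (f w * g w) := by
  rw [lieB_polyField_X0 G γ U Vp hU]
  funext x
  set Y : Phase V → Phase V := fun x => (fun w => (f w).eval (x.1 w), fun w =>
      -(γ w) * (f w).eval (x.1 w) - (derivative (f w)).eval (x.1 w) * x.2 w) with hY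
  have hYs : ContDiff ℝ (⊤ : ℕ∞) Y :=
    (contDiff_pi.2 fun w => contDiff_eval _ (contDiff_q w)).prodMk (contDiff_pi.2 fun w =>
      (contDiff_const.mul (contDiff_eval _ (contDiff_q w))).sub
        ((contDiff_eval _ (contDiff_q w)).mul (contDiff_p w)))
  have hd : DifferentiableAt ℝ Y x := hYs.differentiable (by simp) x
  have h1 : fderiv ℝ Y x (polyField g x) =
      (0, fun w => -((derivative (f w)).eval (x.1 w) * (g w).eval (x.1 w))) := by
    refine Prod.ext (funext fun w => fderiv_fst_eq hd ?_) (funext fun w => fderiv_snd_eq hd ?_)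
    · simp only [hY, polyField, Prod.fst_add, Prod.smul_fst, smul_zero, add_zero]
      exact hasDerivAt_const _ _
    · simp only [hY, polyField, Prod.fst_add, Prod.snd_add, Prod.smul_fst, Prod.smul_snd,
        smul_zero, add_zero, Pi.add_apply, Pi.smul_apply, Pi.zero_apply, smul_eq_mul]
      exact ((hasDerivAt_lin (x.2 w) _).const_mul _).const_sub _
  rw [lieB, h1, fderiv_polyField]
  ext w
  · simp [polyField]
  · simp [polyField, hY]
    ring

/-! ### Membership in `𝓜` -/

lemma MM.zero {V : Type} [Fintype V] [DecidableEq V] {Vs : Finset V} {X : Phase V → Phase V}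
    {Y : Phase V → Phase V} (hY : MM Vs X Y) : MM Vs X 0 := by
  simpa using MM.smul 0 hY

lemma MM.sum {V : Type} [Fintype V] [DecidableEq V] {Vs : Finset V} {X : Phase V → Phase V}
    {ι : Type*} (s : Finset ι) (Y : ι → Phase V → Phase V) (h0 : MM Vs X 0)
    (hY : ∀ i ∈ s, MM Vs X (Y i)) : MM Vs X (∑ i ∈ s, Y i) :=
  Finset.sum_induction Y (MM Vs X) (fun _ _ => MM.add) h0 hY

/-- The space of polynomial families `g` with `∑_w g_w(q_w) ∂_{p_w} ∈ 𝓜`. The hypothesis `0 ∈ 𝓜`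
fails only when no vertex belongs to `V*`. -/
def famSpace {V : Type} [Fintype V] [DecidableEq V] (Vs : Finset V) (X : Phase V → Phase V)
    (h0 : MM Vs X 0) : Submodule ℝ (V → ℝ[X]) where
  carrier := {g | MM Vs X (polyField g)}
  zero_mem' := by
    have : polyField (0 : V → ℝ[X]) = 0 := by funext x; ext w <;> simp [polyField]
    simpa [this] using h0
  add_mem' := by
    intro f g hf hg
    have : polyField (f + g) = polyField f + polyField g := by
      funext x; ext w <;> simp [polyField]
    simpa [this] using MM.add hf hg
  smul_mem' := by
    intro r g hg
    have : polyField (r • g) = r • polyField g := by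
      funext x; ext w <;> simp [polyField]
    simpa [this] using MM.smul r hg

lemma famSpace_closed {V : Type} [Fintype V] [DecidableEq V] (Vs : Finset V) (G : SimpleGraph V)
    [DecidableRel G.Adj] (γ : V → ℝ) (U : V → ℝ → ℝ) (Vp : V → V → Polynomial ℝ)
    (hU : ∀ v, ContDiff ℝ (⊤ : ℕ∞) (U v)) (h0 : MM Vs (X0 G γ U Vp) 0) :
    LeibnizClosed (famSpace Vs (X0 G γ U Vp) h0) := by
  intro f hf g hg
  change MM Vs _ _
  rw [← lieB_lieB_polyField G γ U Vp hU]
  exact MM.lie (MM.lieX hf) hg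

/-- Components along `∂_{p_c}` can be removed from an element of `𝓜` when `∂_{p_c} ∈ 𝓜`. -/
lemma MM.kill {V : Type} [Fintype V] [DecidableEq V] {Vs : Finset V} {X : Phase V → Phase V}
    {Y : Phase V → Phase V} (hY : MM Vs X Y) (hYs : ContDiff ℝ (⊤ : ℕ∞) Y) (C : Finset V)
    (hC : ∀ c ∈ C, MM Vs X (dp c)) :
    MM Vs X (fun x => ((Y x).1, fun w => if w ∈ C then 0 else (Y x).2 w)) := by
  have h1 : MM Vs X (∑ c ∈ C, fun x => (Y x).2 c • (dp c : Phase V → Phase V) x) :=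
    MM.sum C _ hY.zero fun c hc => MM.mulS (fun x => (Y x).2 c) (by fun_prop) (hC c hc)
  convert MM.add hY (MM.smul (-1) h1) using 1
  funext x
  ext w
  · simp [dp, Finset.sum_apply, Prod.fst_sum]
  · by_cases hw : w ∈ C <;>
    simp [dp, Finset.sum_apply, Prod.snd_sum, Pi.single_apply, hw]

lemma lieB_dq_relField {V : Type} [Fintype V] [DecidableEq V] (c : V) (g : V → ℝ[X])
    (hg : g c = 0) : lieB (dq c) (relField c g) =
      (-1 : ℝ) • relField c (fun w => derivative (g w)) := by
  funext x
  have hd : DifferentiableAt ℝ (relField c g) x :=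
    (contDiff_relField c g).differentiable (by simp) x
  have h1 : fderiv ℝ (relField c g) x (dq c x) =
      (0, fun w => -(derivative (g w)).eval (x.1 w - x.1 c)) := by
    refine Prod.ext (funext fun w => fderiv_fst_eq hd ?_) (funext fun w => fderiv_snd_eq hd ?_)
    · exact hasDerivAt_const _ _
    · by_cases hw : w = c
      · subst hw
        simpa [relField, hg] using hasDerivAt_const (0 : ℝ) (0 : ℝ)
      · simp only [relField, dq, Prod.fst_add, Prod.smul_fst, Pi.add_apply, Pi.smul_apply,
          smul_eq_mul, Pi.single_eq_same, Pi.single_eq_of_ne hw, mul_one, mul_zero, add_zero]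
        have := hasDerivAt_eval_lin (g w) (x.1 w - x.1 c) (-1)
        convert this using 2
        · congr 1; ring
        · ring
  rw [lieB, h1, show dq c = fun _ : Phase V => ((Pi.single c 1, 0) : Phase V) from rfl]
  ext w <;> simp [relField]

lemma mm_relField_iterate {V : Type} [Fintype V] [DecidableEq V] {Vs : Finset V}
    {X : Phase V → Phase V} {c : V} (hc : MM Vs X (dq c)) {g : V → ℝ[X]} (hg : g c = 0)
    (h : MM Vs X (relField c g)) (k : ℕ) :
    MM Vs X (relField c fun w => derivative^[k] (g w)) := by
  induction k with
  | zero => exact h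
  | succ k ih =>
    have h1 := MM.smul (-1) (MM.lie hc ih)
    rw [lieB_dq_relField c _ (by simp [hg])] at h1
    simpa [smul_smul, Function.iterate_succ_apply'] using h1

/-- Taylor's formula `g_w(q_w) = ∑_k q_c^k / k! * g_w^{(k)}(q_w - q_c)`, in which the coefficients
`q_c^k / k!` are smooth and do not depend on `w`. -/
lemma mm_polyField_of_relField {V : Type} [Fintype V] [DecidableEq V] {Vs : Finset V}
    {X : Phase V → Phase V} {c : V} {g : V → ℝ[X]}
    (h : ∀ k, MM Vs X (relField c fun w => derivative^[k] (g w))) : MM Vs X (polyField g) := by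
  obtain ⟨N, hN⟩ : ∃ N, ∀ w, (g w).natDegree < N :=
    ⟨(∑ w, (g w).natDegree) + 1, fun w => Nat.lt_succ_of_le
      (Finset.single_le_sum (f := fun w => (g w).natDegree) (fun _ _ => Nat.zero_le _)
        (Finset.mem_univ w))⟩
  have h1 : MM Vs X (∑ k ∈ Finset.range N, fun x =>
      ((k.factorial : ℝ)⁻¹ * x.1 c ^ k) • relField c (fun w => derivative^[k] (g w)) x) :=
    MM.sum _ _ (h 0).zero fun k _ => MM.mulS (fun x => (k.factorial : ℝ)⁻¹ * x.1 c ^ k)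
      (by fun_prop) (h k)
  convert h1 using 1
  funext x
  ext w
  · simp [polyField, relField, Finset.sum_apply, Prod.fst_sum]
  · simp only [polyField, relField, Finset.sum_apply, Prod.snd_sum, Prod.smul_snd, Pi.smul_apply,
      smul_eq_mul]
    have e := taylor_eval (x.1 w - x.1 c) (g w) (x.1 c)
    rw [add_sub_cancel] at e
    rw [← e, eval_eq_sum_range' (n := N) (by rw [natDegree_taylor]; exact hN w)]
    refine Finset.sum_congr rfl fun k _ => ?_
    rw [taylor_coeff, ← factorial_smul_hasseDeriv]
    have : (k.factorial : ℝ) ≠ 0 := by positivity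
    simp
    field_simp

/-- The family of the `V''_{wc}` for `w ∉ C` adjacent to `c`, extended by zero. -/
def forceFam {V : Type} (G : SimpleGraph V) (Vp : V → V → Polynomial ℝ) (C : Finset V)
    (c : V) : V → ℝ[X] :=
  fun w => if w ∉ C ∧ G.Adj w c then derivative (derivative (Vp w c)) else 0

/-- The field in the conclusion is `[∂_{q_c}, X₀]` without its components along `∂_{p_u}`, `u ∈ C`. -/
lemma mm_relField_forceFam {V : Type} [Fintype V] [DecidableEq V] (Vs : Finset V)
    (G : SimpleGraph V) [DecidableRel G.Adj] (γ : V → ℝ) (U : V → ℝ → ℝ)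
    (Vp : V → V → Polynomial ℝ) (hU : ∀ v, ContDiff ℝ (⊤ : ℕ∞) (U v)) (C : Finset V)
    (hC : ∀ c ∈ C, Controllable Vs (X0 G γ U Vp) c) {c : V} (hc : c ∈ C) :
    MM Vs (X0 G γ U Vp) (relField c (forceFam G Vp C c)) := by
  have hX := contDiff_X0 G γ U Vp hU
  have e : lieB (dq c) (X0 G γ U Vp) = fun x => fderiv ℝ (X0 G γ U Vp) x (Pi.single c 1, 0) := by
    funext x
    rw [lieB, show dq c = fun _ : Phase V => ((Pi.single c 1, 0) : Phase V) from rfl]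
    simp
  have h1 := MM.kill (MM.lieX (hC c hc).1)
    (by rw [e]; exact (hX.fderiv_right (by simp)).clm_apply contDiff_const) C
    (fun c hc => (hC c hc).2)
  convert h1 using 1
  rw [e]
  funext x
  have hd : DifferentiableAt ℝ (X0 G γ U Vp) x := hX.differentiable (by simp) x
  refine Prod.ext (funext fun w => Eq.symm (fderiv_fst_eq hd ?_)) (funext fun w => ?_)
  · simp only [X0, Prod.snd_add, Prod.smul_snd, smul_zero, add_zero]
    exact hasDerivAt_const _ _
  · by_cases hw : w ∈ C
    · simp [relField, forceFam, hw]
    · have hwc : w ≠ c := fun h => hw (h ▸ hc)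
      dsimp only
      rw [if_neg hw]
      refine Eq.symm (fderiv_snd_eq hd ?_)
      simp only [X0, Prod.fst_add, Prod.smul_fst, Prod.snd_add, Prod.smul_snd, smul_zero, add_zero,
        Pi.add_apply, Pi.smul_apply, smul_eq_mul, Pi.single_eq_of_ne hwc, mul_zero]
      have hsum : HasDerivAt (fun t : ℝ => ∑ u ∈ Finset.univ.filter (fun u => G.Adj w u),
          (derivative (Vp w u)).eval (x.1 w - (x.1 u + t * (Pi.single c 1 : V → ℝ) u)))
          (∑ u ∈ Finset.univ.filter (fun u => G.Adj w u),
            (derivative (derivative (Vp w u))).eval (x.1 w - x.1 u) *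
              (-(Pi.single c 1 : V → ℝ) u)) 0 := by
        refine HasDerivAt.fun_sum fun u _ => ?_
        have e : ∀ t : ℝ, x.1 w - (x.1 u + t * (Pi.single c 1 : V → ℝ) u) =
            x.1 w - x.1 u + t * (-(Pi.single c 1 : V → ℝ) u) := fun t => by ring
        simp only [e]
        exact hasDerivAt_eval_lin (derivative (Vp w u)) _ _
      refine (hsum.const_sub _).congr_deriv ?_
      simp only [relField, forceFam, hw, not_false_eq_true, true_and]
      by_cases hadj : G.Adj w c
      · rw [if_pos hadj, Finset.sum_eq_single c]
        · simp
        · intro u _ hu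
          simp [Pi.single_eq_of_ne hu]
        · simp [hadj]
      · rw [if_neg hadj, Finset.sum_eq_zero]
        · simp
        · intro u hu
          have : u ≠ c := by rintro rfl; exact hadj (by simpa using hu)
          simp [Pi.single_eq_of_ne this]

lemma lieB_dp_X0 {V : Type} [Fintype V] [DecidableEq V] (G : SimpleGraph V)
    [DecidableRel G.Adj] (γ : V → ℝ) (U : V → ℝ → ℝ) (Vp : V → V → Polynomial ℝ)
    (hU : ∀ v, ContDiff ℝ (⊤ : ℕ∞) (U v)) (v : V) :
    lieB (dp v) (X0 G γ U Vp) = dq v + (-(γ v)) • dp v := by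
  have e : dp v = polyField (fun w => C ((Pi.single v 1 : V → ℝ) w)) := by
    funext x; ext w <;> simp [dp, polyField]
  rw [e, lieB_polyField_X0 G γ U Vp hU]
  funext x
  ext w
  · simp [dq, polyField]
  · by_cases hw : w = v
    · subst hw; simp [dq, polyField]
    · simp [dq, polyField, hw]

lemma controllable_of_dp {V : Type} [Fintype V] [DecidableEq V] {Vs : Finset V} (G : SimpleGraph V)
    [DecidableRel G.Adj] (γ : V → ℝ) (U : V → ℝ → ℝ) (Vp : V → V → Polynomial ℝ)
    (hU : ∀ v, ContDiff ℝ (⊤ : ℕ∞) (U v)) (v : V) (h : MM Vs (X0 G γ U Vp) (dp v)) :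
    Controllable Vs (X0 G γ U Vp) v := by
  refine ⟨?_, h⟩
  have h1 := MM.add (MM.lieX h) (MM.smul (γ v) h)
  rw [lieB_dp_X0 G γ U Vp hU] at h1
  convert h1 using 1
  simp

lemma second_deriv_symm {P Q : ℝ[X]} (h : ∀ x, P.eval x = Q.eval (-x)) (x : ℝ) :
    (derivative (derivative P)).eval x = (derivative (derivative Q)).eval (-x) := by
  have e : P = Q.comp (-X) := Polynomial.funext fun x => by simp [h]
  rw [e]
  simp [derivative_comp]

/-! ### Controllability -/

/-- One step of the recursion: if all vertices of `C` are controllable, so is every vertex of `N(C)`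
that is alone in its `C`-equivalence class. -/
lemma controllable_step {V : Type} [Fintype V] [DecidableEq V] (Vs : Finset V)
    (G : SimpleGraph V) [DecidableRel G.Adj] (γ : V → ℝ) (U : V → ℝ → ℝ)
    (Vp : V → V → Polynomial ℝ) (hU : ∀ v, ContDiff ℝ (⊤ : ℕ∞) (U v))
    (hsym : ∀ u v, G.Adj u v → ∀ x : ℝ, (Vp v u).eval x = (Vp u v).eval (-x))
    (hdeg : ∀ u v, G.Adj u v → 3 ≤ (Vp u v).natDegree) (C : Finset V)
    (hC : ∀ c ∈ C, Controllable Vs (X0 G γ U Vp) c) (v : V) (hv : v ∈ NC G C)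
    (huniq : ∀ w ∈ NC G C, CEquiv G Vp C w v → w = v) : Controllable Vs (X0 G γ U Vp) v := by
  simp only [NC, Finset.mem_filter, Finset.mem_univ, true_and] at hv huniq
  obtain ⟨hvC, c₀, hc₀, hadj₀⟩ := hv
  have h0 : MM Vs (X0 G γ U Vp) 0 := (hC c₀ hc₀).1.zero
  set S := famSpace Vs (X0 G γ U Vp) h0
  have hS : LeibnizClosed S := famSpace_closed Vs G γ U Vp hU h0
  have hf : ∀ c ∈ C, ∀ k, (fun w => derivative^[k] (forceFam G Vp C c w)) ∈ S := by
    intro c hc k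
    refine mm_polyField_of_relField (c := c) fun j => ?_
    simp only [← Function.iterate_add_apply]
    exact mm_relField_iterate (hC c hc).1 (by simp [forceFam, hc])
      (mm_relField_forceFam Vs G γ U Vp hU C hC hc) _
  have hd2 : ∀ w c, G.Adj w c → 0 < (derivative (derivative (Vp w c))).natDegree := by
    intro w c h
    have := hdeg w c h
    rw [natDegree_derivative, natDegree_derivative]
    omega
  have hnc : ∀ c w, (forceFam G Vp C c w).natDegree = 0 → forceFam G Vp C c w = 0 := by
    intro c w h
    unfold forceFam at h ⊢
    split_ifs at h ⊢ with hw
    · exact absurd h (hd2 w c hw.2).ne'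
    · rfl
  have hsep : ∀ c ∈ C, ∀ w, ¬ PolyEquiv (forceFam G Vp C c v) (forceFam G Vp C c w) →
      ∃ h ∈ multAlg S, h v ≠ h w := fun c hc w hne =>
    sep hS (∑ w, (forceFam G Vp C c w).natDegree) _ (hf c hc)
      (fun w => Finset.single_le_sum (f := fun w => (forceFam G Vp C c w).natDegree)
        (fun _ _ => Nat.zero_le _) (Finset.mem_univ w)) (hnc c) v w hne
  -- a nonconstant polynomial is not a translate of zero
  have hz : ∀ p : ℝ[X], 0 < p.natDegree → ¬ PolyEquiv p 0 ∧ ¬ PolyEquiv 0 p := by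
    intro p hp
    constructor
    · rintro ⟨δ, h⟩
      have : p = 0 := Polynomial.funext fun x => by simpa using h x
      simp [this] at hp
    · rintro ⟨δ, h⟩
      have : p = 0 := Polynomial.funext fun x => by simpa using (h (x - δ)).symm
      simp [this] at hp
  have hall : ∀ w, w ≠ v → ∃ h ∈ multAlg S, h v ≠ h w := by
    intro w hwv
    have hfv : ∀ c, G.Adj c v → forceFam G Vp C c v = derivative (derivative (Vp v c)) :=
      fun c h => if_pos ⟨hvC, h.symm⟩
    by_cases hw : w ∉ C ∧ ∃ c ∈ C, G.Adj c w
    · have hne : ¬ CEquiv G Vp C w v := fun h => hwv (huniq w hw h)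
      have hfw : ∀ c, G.Adj c w → forceFam G Vp C c w = derivative (derivative (Vp w c)) :=
        fun c h => if_pos ⟨hw.1, h.symm⟩
      by_contra hcon
      refine hne ⟨fun c hc => ⟨fun h => ?_, fun h => ?_⟩, fun c hc h1 h2 => ?_⟩
      · by_contra h'
        refine hcon (hsep c hc w ?_)
        rw [hfw c h, show forceFam G Vp C c v = 0 from if_neg fun h => h' h.2.symm]
        exact (hz _ (hd2 _ _ h.symm)).2
      · by_contra h'
        refine hcon (hsep c hc w ?_)
        rw [hfv c h, show forceFam G Vp C c w = 0 from if_neg fun h => h' h.2.symm]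
        exact (hz _ (hd2 _ _ h.symm)).1
      · by_contra h'
        refine hcon (hsep c hc w ?_)
        rw [hfv c h2, hfw c h1]
        rintro ⟨δ, h⟩
        refine h' ⟨δ, fun x => ?_⟩
        have e1 := second_deriv_symm (hsym w c h1.symm) x
        have e2 := second_deriv_symm (hsym v c h2.symm) (x + δ)
        have := h (-(x + δ))
        rw [e1, e2, this]
        congr 1
        ring
    · refine hsep c₀ hc₀ w ?_
      rw [hfv c₀ hadj₀, show forceFam G Vp C c₀ w = 0 from
        if_neg fun h => hw ⟨h.1, c₀, hc₀, h.2.symm⟩]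
      exact (hz _ (hd2 _ _ hadj₀.symm)).1
  have hsingle := single_mem (multAlg S) v hall
  set p := derivative (derivative (Vp v c₀)) with hp
  have hfin := S.smul_mem ((p.natDegree.factorial : ℝ) * p.leadingCoeff)⁻¹
    (hsingle _ (hf c₀ hc₀ p.natDegree))
  apply controllable_of_dp G γ U Vp hU
  change MM Vs (X0 G γ U Vp) (polyField _) at hfin
  convert hfin using 1
  have hp0 : p.leadingCoeff ≠ 0 := by
    rw [Ne, leadingCoeff_eq_zero]
    intro h
    have := hd2 v c₀ hadj₀.symm
    rw [← hp, h] at this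
    simp at this
  funext x
  ext w
  · simp [dp, polyField]
  · by_cases hwv : w = v
    · subst hwv
      have e1 : forceFam G Vp C c₀ w = p := if_pos ⟨hvC, hadj₀.symm⟩
      have e2 : derivative^[p.natDegree] p =
          Polynomial.C ((p.natDegree.factorial : ℝ) * p.leadingCoeff) := by
        rw [eq_C_of_natDegree_le_zero (p := derivative^[p.natDegree] p)
          ((natDegree_iterate_derivative p _).trans (by simp)), coeff_iterate_derivative]
        simp [Nat.descFactorial_self]
      have : (p.natDegree.factorial : ℝ) ≠ 0 := by positivity
      simp [dp, polyField, e1, e2]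
      field_simp
    · simp [dp, polyField, hwv]

/-- Theorem 5.6. If `C_k = V` for some `k ≥ 0`, then the network is
controllable: `∂_{q_v} ∈ 𝓜` and `∂_{p_v} ∈ 𝓜` for every `v ∈ V`. -/
theorem network_controllable_of_Cseq_eq_univ
    {V : Type} [Fintype V] [DecidableEq V] (G : SimpleGraph V) [DecidableRel G.Adj]
    (Vstar : Finset V) (γ : V → ℝ) (U : V → ℝ → ℝ) (Vp : V → V → Polynomial ℝ)
    (hγpos : ∀ v ∈ Vstar, 0 < γ v) (hγ0 : ∀ v ∉ Vstar, γ v = 0)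
    (hU : ∀ v, ContDiff ℝ (⊤ : ℕ∞) (U v))
    (hsym : ∀ u v, G.Adj u v → ∀ x : ℝ, (Vp v u).eval x = (Vp u v).eval (-x))
    (hdeg : ∀ u v, G.Adj u v → 3 ≤ (Vp u v).natDegree)
    (hk : ∃ k : ℕ, Cseq G Vp Vstar k = Finset.univ) :
    ∀ v : V, Controllable Vstar (X0 G γ U Vp) v := by
  have key : ∀ k, ∀ v ∈ Cseq G Vp Vstar k, Controllable Vstar (X0 G γ U Vp) v := by
    intro k
    induction k with
    | zero =>
      intro v hv
      exact controllable_of_dp G γ U Vp hU v (MM.basic v hv)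
    | succ k ih =>
      intro v hv
      rw [Cseq, Finset.mem_union, Finset.mem_filter] at hv
      rcases hv with hv | ⟨hv, huniq⟩
      · exact ih v hv
      · exact controllable_step Vstar G γ U Vp hU hsym hdeg _ ih v hv huniq
  obtain ⟨k, hk⟩ := hk
  intro v
  exact key k v (hk ▸ Finset.mem_univ v)
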